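/- Let K > 0 and J ∈ ℝ, and assume φ_{K,J} attains its minimum over [−1,1] at a unique point m* ∈ (−1,1) with φ_{K,J}''(m*) > 0. Let (a_n)_n be a sequence of positive reals with a_n → ∞ and a_n/n^{1/6} → 0. Then for every x ≥ 0: lim_{n→∞} (1/a_n²)·log P_{n,K,J}( W_n > a_n·x ) = −x²/2 and lim_{n→∞} (1/a_n²)·log P_{n,K,J}( W_n < −a_n·x ) = −x²/2 (moderate deviation principle for the rescaled magnetization with speed a_n² and rate function x²/2). -/

import Mathlib

/-!
The law of the magnetization is a sum over the number `k` of spins `+1`, with weights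
`C(n, k) exp (n g(u))` at `u = (2k - n) / n`. Stirling's formula turns such a weight into
`exp (-n (φ(u) - φ(m))) / √n`, up to a constant factor and the normalization `exp (-n φ(m))`, where
`φ = I - g` is the free energy and `m` its minimizer.

Near `m` the Taylor expansion of `φ` makes this a Gaussian profile in the deviation
`z = √(n φ''(m)) (u - m)`: the weight lies between constant multiples of
`exp (-(1 ± ε) z² / 2) / √n`. The levels form a lattice of spacing of order `1 / √n` in `z`, so
summing over `|z| ≥ t` gives at most `C exp (-(1 - ε) t² / 2)`, while every window of length one in
`z` contains at least `√(n / φ''(m)) / 4` levels, which gives the matching lower bound. At a fixed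
distance from `m`, compactness and the uniqueness of the minimizer make the contribution
exponentially small. The same bounds at `t = 0` keep the normalized partition function between two
positive constants: no power of `n` is lost, which matters because `a_n` may grow arbitrarily
slowly.

Hence `log P(W_n > a_n x) = -(1 + O(ε)) (a_n x + O(1))² / 2 + O(1)`, uniformly as long as `a_n / √n`
is small; divide by `a_n²` and let `ε → 0`.
-/

open MeasureTheory ProbabilityTheory Real Filter

noncomputable section

/-- The spin value `±1` associated with a Boolean. -/
def spin (b : Bool) : ℝ := if b then 1 else -1

/-- Total magnetization `S_n(x) = ∑ i, x_i`. -/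
def totalMag (n : ℕ) (x : Fin n → Bool) : ℝ := ∑ i, spin (x i)

/-- Magnetization per particle `m_n(x) = S_n(x)/n`. -/
def magPP (n : ℕ) (x : Fin n → Bool) : ℝ := totalMag n x / n

/-- Boltzmann–Gibbs weight of a configuration in the cubic Curie–Weiss model
(the reference factor `2^{-n}` is constant and cancels upon normalization). -/
def cubicWeight (n : ℕ) (K J : ℝ) (x : Fin n → Bool) : ℝ :=
  Real.exp (n * (K / 3 * (magPP n x) ^ 3 + J / 2 * (magPP n x) ^ 2))

/-- The cubic Curie–Weiss Boltzmann–Gibbs probability measure `P_{n,K,J}`. -/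
def cubicMeasure (n : ℕ) (K J : ℝ) : Measure (Fin n → Bool) :=
  (∑ x : Fin n → Bool, ENNReal.ofReal (cubicWeight n K J x))⁻¹ •
    ∑ x : Fin n → Bool, ENNReal.ofReal (cubicWeight n K J x) • Measure.dirac x

/-- The probability of an event under `P_{n,K,J}`, as a real number. -/
def cubicProb (n : ℕ) (K J : ℝ) (s : Set (Fin n → Bool)) : ℝ :=
  (cubicMeasure n K J s).toReal

/-- The binary relative entropy `I(m)`. -/
def binEnt (m : ℝ) : ℝ :=
  (1 - m) / 2 * Real.log ((1 - m) / 2) + (1 + m) / 2 * Real.log ((1 + m) / 2)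

/-- The function `φ_{K,J}(x) = I(x) − (K/3)x³ − (J/2)x²`. -/
def phiKJ (K J : ℝ) (x : ℝ) : ℝ := binEnt x - K / 3 * x ^ 3 - J / 2 * x ^ 2

/-- The standard normal cumulative distribution function. -/
def stdNormalCDF (z : ℝ) : ℝ :=
  (ProbabilityTheory.gaussianReal 0 1 (Set.Iic z)).toReal

end

open scoped Topology Nat

section Binomial

/-- Stirling's approximation of `n !` without its constant `√(2π)`. -/
noncomputable def stirlingApprox (n : ℕ) : ℝ := √n * (n / exp 1) ^ n

lemma stirlingApprox_pos {n : ℕ} (hn : 0 < n) : 0 < stirlingApprox n := by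
  unfold stirlingApprox
  positivity

lemma stirlingApprox_nonneg (n : ℕ) : 0 ≤ stirlingApprox n := by
  unfold stirlingApprox
  positivity

lemma sqrt_two_pi_mul_stirlingApprox_le_factorial (n : ℕ) : √(2 * π) * stirlingApprox n ≤ n ! := by
  rw [stirlingApprox, ← mul_assoc, ← Real.sqrt_mul two_pi_pos.le]
  exact Stirling.le_factorial_stirling n

lemma factorial_le_exp_one_mul_stirlingApprox {n : ℕ} (hn : 0 < n) :
    (n ! : ℝ) ≤ exp 1 * stirlingApprox n := by
  obtain ⟨m, rfl⟩ := Nat.exists_eq_succ_of_ne_zero hn.ne'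
  have h : Stirling.stirlingSeq (m + 1) ≤ exp 1 / √2 := by
    simpa using Stirling.stirlingSeq'_antitone (Nat.zero_le m)
  rw [Stirling.stirlingSeq, div_le_iff₀ (by positivity), Real.sqrt_mul (by positivity)] at h
  refine h.trans_eq ?_
  unfold stirlingApprox
  field_simp

lemma exp_mul_binEntropy_mul {n k : ℕ} (hk : k ≤ n) :
    exp (n * binEntropy (k / n)) * ((k / n : ℝ) ^ k * (1 - k / n : ℝ) ^ (n - k)) = 1 := by
  rcases eq_or_ne n 0 with rfl | hn
  · simp [Nat.le_zero.1 hk]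
  have exp_mul_log (j : ℕ) (p : ℝ) (hp : n * p = j) : exp (n * (p * log p)) = p ^ j := by
    rw [← mul_assoc, hp]
    rcases Nat.eq_zero_or_pos j with rfl | hj
    · simp
    · have : 0 < p := pos_of_mul_pos_right (hp ▸ Nat.cast_pos.2 hj : 0 < (n : ℝ) * p) n.cast_nonneg
      rw [exp_nat_mul, exp_log this]
  rw [← exp_mul_log k (k / n) (by field_simp),
    ← exp_mul_log (n - k) (1 - k / n) (by rw [Nat.cast_sub hk]; field_simp),
    ← exp_add, ← exp_add, exp_eq_one_iff, binEntropy, log_inv, log_inv]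
  ring

/-- A single term of the binomial expansion of `(k/n + (1 - k/n)) ^ n = 1` is at most one. -/
lemma choose_le_exp_binEntropy (n k : ℕ) : (n.choose k : ℝ) ≤ exp (n * binEntropy (k / n)) := by
  rcases lt_or_ge n k with hnk | hk
  · rw [Nat.choose_eq_zero_of_lt hnk, Nat.cast_zero]
    positivity
  have hp : (k / n : ℝ) ≤ 1 := div_le_one_of_le₀ (by exact_mod_cast hk) n.cast_nonneg
  have hterm : (k / n : ℝ) ^ k * (1 - k / n : ℝ) ^ (n - k) * n.choose k ≤ 1 := by
    calc _ ≤ ∑ j ∈ Finset.range (n + 1),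
          (k / n : ℝ) ^ j * (1 - k / n : ℝ) ^ (n - j) * n.choose j :=
          Finset.single_le_sum
            (f := fun j => (k / n : ℝ) ^ j * (1 - k / n : ℝ) ^ (n - j) * n.choose j)
            (fun j _ => by have := sub_nonneg.2 hp; positivity)
            (Finset.mem_range.2 (Nat.lt_succ_of_le hk))
      _ = 1 := by rw [← add_pow, add_sub_cancel, one_pow]
  calc (n.choose k : ℝ)
      = exp (n * binEntropy (k / n)) *
          ((k / n : ℝ) ^ k * (1 - k / n : ℝ) ^ (n - k) * n.choose k) := by
        rw [← mul_assoc, exp_mul_binEntropy_mul hk, one_mul]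
    _ ≤ exp (n * binEntropy (k / n)) := mul_le_of_le_one_right (exp_pos _).le hterm

lemma stirlingApprox_eq_mul {n k : ℕ} (hk : 0 < k) (hkn : k < n) :
    stirlingApprox n = √(n / (k * (n - k))) * exp (n * binEntropy (k / n)) *
      (stirlingApprox k * stirlingApprox (n - k)) := by
  have hk' : (0 : ℝ) < k := by exact_mod_cast hk
  have hn : (0 : ℝ) < n := by exact_mod_cast hk.trans hkn
  have hl : (0 : ℝ) < n - k := sub_pos.2 (by exact_mod_cast hkn)
  have hsqrt : √(n / (k * (n - k)) : ℝ) * (√k * √(n - k : ℝ)) = √n := by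
    rw [← Real.sqrt_mul hk'.le, ← Real.sqrt_mul (by positivity)]
    congr 1
    field_simp
  have hpow : ((n : ℝ) / exp 1) ^ n = exp (n * binEntropy (k / n)) *
      ((k / exp 1 : ℝ) ^ k * ((n - k) / exp 1 : ℝ) ^ (n - k)) := by
    have h1 : (k / exp 1 : ℝ) = n / exp 1 * (k / n) := by field_simp
    have h2 : ((n - k) / exp 1 : ℝ) = n / exp 1 * (1 - k / n) := by field_simp
    have h3 : (n / exp 1 : ℝ) ^ n = (n / exp 1) ^ k * (n / exp 1) ^ (n - k) := by
      rw [← pow_add, Nat.add_sub_cancel' hkn.le]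
    rw [h1, h2, mul_pow, mul_pow, h3]
    linear_combination -(n / exp 1 : ℝ) ^ k * (n / exp 1) ^ (n - k) * exp_mul_binEntropy_mul hkn.le
  simp only [stirlingApprox]
  rw [Nat.cast_sub hkn.le, hpow, ← hsqrt]
  ring

lemma exp_one_sq_le_four_mul_sqrt_two_pi : exp 1 ^ 2 ≤ 4 * √(2 * π) := by
  have hsqrt : 2 ≤ √(2 * π) := Real.le_sqrt_of_sq_le (by linarith [Real.pi_gt_three])
  nlinarith [Real.exp_one_lt_d9, exp_pos 1]

lemma sqrt_mul_exp_binEntropy_le_choose {n k : ℕ} (hk : 0 < k) (hkn : k < n) :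
    1 / 4 * (√(n / (k * (n - k))) * exp (n * binEntropy (k / n))) ≤ n.choose k := by
  set B := √(n / (k * (n - k)) : ℝ) * exp (n * binEntropy (k / n))
  set S := stirlingApprox k * stirlingApprox (n - k)
  have hl := Nat.sub_pos_of_lt hkn
  have hS : 0 < S := mul_pos (stirlingApprox_pos hk) (stirlingApprox_pos hl)
  have hmul : √(2 * π) * B * S ≤ exp 1 ^ 2 * n.choose k * S :=
    calc √(2 * π) * B * S = √(2 * π) * stirlingApprox n := by
          rw [stirlingApprox_eq_mul hk hkn, mul_assoc]
      _ ≤ n ! := sqrt_two_pi_mul_stirlingApprox_le_factorial n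
      _ = n.choose k * (k ! * (n - k)! : ℝ) := by
          rw [← mul_assoc]
          exact_mod_cast (Nat.choose_mul_factorial_mul_factorial hkn.le).symm
      _ ≤ n.choose k * ((exp 1 * stirlingApprox k) * (exp 1 * stirlingApprox (n - k))) := by
          gcongr ?_ * ?_
          exact mul_le_mul (factorial_le_exp_one_mul_stirlingApprox hk)
            (factorial_le_exp_one_mul_stirlingApprox hl) (Nat.cast_nonneg _)
            (mul_nonneg (exp_pos 1).le (stirlingApprox_nonneg k))
      _ = exp 1 ^ 2 * n.choose k * S := by ring
  have hB : √(2 * π) * B ≤ √(2 * π) * (4 * n.choose k) :=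
    calc √(2 * π) * B ≤ exp 1 ^ 2 * n.choose k := le_of_mul_le_mul_right hmul hS
      _ ≤ 4 * √(2 * π) * n.choose k := by gcongr; exact exp_one_sq_le_four_mul_sqrt_two_pi
      _ = √(2 * π) * (4 * n.choose k) := by ring
  linarith [le_of_mul_le_mul_left hB (by positivity)]

lemma choose_le_sqrt_mul_exp_binEntropy {n k : ℕ} (hk : 0 < k) (hkn : k < n) :
    (n.choose k : ℝ) ≤ √(n / (k * (n - k))) * exp (n * binEntropy (k / n)) := by
  set B := √(n / (k * (n - k)) : ℝ) * exp (n * binEntropy (k / n))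
  set S := stirlingApprox k * stirlingApprox (n - k)
  have hS : 0 < S :=
    mul_pos (stirlingApprox_pos hk) (stirlingApprox_pos (Nat.sub_pos_of_lt hkn))
  have hmul : n.choose k * (2 * π * S) ≤ B * (2 * π * S) :=
    calc n.choose k * (2 * π * S)
        = n.choose k * ((√(2 * π) * stirlingApprox k) * (√(2 * π) * stirlingApprox (n - k))) := by
          linear_combination -(n.choose k * S : ℝ) * Real.mul_self_sqrt two_pi_pos.le
      _ ≤ n.choose k * (k ! * (n - k)! : ℝ) := by
          gcongr ?_ * ?_
          exact mul_le_mul (sqrt_two_pi_mul_stirlingApprox_le_factorial k)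
            (sqrt_two_pi_mul_stirlingApprox_le_factorial (n - k))
            (mul_nonneg (Real.sqrt_nonneg _) (stirlingApprox_nonneg (n - k))) (Nat.cast_nonneg _)
      _ = n ! := by
          rw [← mul_assoc]
          exact_mod_cast Nat.choose_mul_factorial_mul_factorial hkn.le
      _ ≤ exp 1 * stirlingApprox n := factorial_le_exp_one_mul_stirlingApprox (hk.trans hkn)
      _ = exp 1 * (B * S) := by rw [stirlingApprox_eq_mul hk hkn]
      _ ≤ 2 * π * (B * S) := by
          gcongr
          linarith [Real.exp_one_lt_three, Real.pi_gt_three]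
      _ = B * (2 * π * S) := by ring
  exact le_of_mul_le_mul_right hmul (by positivity)

end Binomial

section Analysis

lemma taylor_isLittleO_of_contDiffAt {f : ℝ → ℝ} {m : ℝ} {n : ℕ} (hf : ContDiffAt ℝ n f m) :
    (fun u => f u - ∑ i ∈ Finset.range (n + 1), (i ! : ℝ)⁻¹ * (u - m) ^ i * iteratedDeriv i f m)
      =o[𝓝 m] fun u => (u - m) ^ n := by
  obtain ⟨s, hs, hfs⟩ := hf.contDiffOn le_rfl (by simp)
  obtain ⟨r, hr, hrs⟩ := Metric.mem_nhds_iff.1 hs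
  have hm := Metric.mem_ball_self (x := m) hr
  have h := taylor_isLittleO (convex_ball m r) hm (hfs.mono hrs)
  rw [Metric.isOpen_ball.nhdsWithin_eq hm] at h
  simpa only [taylor_within_apply, iteratedDerivWithin_of_isOpen Metric.isOpen_ball hm,
    smul_eq_mul] using h

lemma isLittleO_sub_sub_sq_of_isLocalMin {f : ℝ → ℝ} {m : ℝ} (hf : ContDiffAt ℝ 2 f m)
    (hmin : IsLocalMin f m) :
    (fun u => f u - f m - iteratedDeriv 2 f m / 2 * (u - m) ^ 2) =o[𝓝 m]
      fun u => (u - m) ^ 2 := by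
  refine (taylor_isLittleO_of_contDiffAt (n := 2) hf).congr_left fun u => ?_
  simp only [Finset.sum_range_succ, Finset.sum_range_zero, iteratedDeriv_zero, iteratedDeriv_one,
    hmin.deriv_eq_zero]
  norm_num
  ring

lemma exists_add_le_of_isCompact_of_lt {X : Type*} [PseudoMetricSpace X] {s : Set X}
    (hs : IsCompact s) {f : X → ℝ} (hf : ContinuousOn f s) {m : X}
    (hlt : ∀ y ∈ s, y ≠ m → f m < f y) {δ : ℝ} (hδ : 0 < δ) :
    ∃ η > 0, ∀ y ∈ s, δ ≤ dist y m → f m + η ≤ f y := by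
  have hclosed : IsClosed {y | δ ≤ dist y m} := isClosed_le continuous_const (by fun_prop)
  have hlt' : ∀ y ∈ s ∩ {y | δ ≤ dist y m}, f m < f y := fun y hy =>
    hlt y hy.1 <| by
      rintro rfl
      exact (hδ.trans_le hy.2).ne' (dist_self y)
  obtain ⟨v, hv, hle⟩ := (hs.inter_right hclosed).exists_forall_le'
    (hf.mono Set.inter_subset_left) hlt'
  exact ⟨v - f m, sub_pos.2 hv, fun y hy hd => by linarith [hle y ⟨hy, hd⟩]⟩

lemma add_one_mul_exp_neg_mul_le {η t : ℝ} (hη : 0 < η) (ht : 0 ≤ t) :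
    (t + 1) * exp (-(t * η)) ≤ (2 / η + 1) * exp (-(t * η / 2)) := by
  have hexp : t * η / 2 + 1 ≤ exp (t * η / 2) := add_one_le_exp _
  have hlin : t + 1 ≤ (2 / η + 1) * exp (t * η / 2) :=
    calc t + 1 ≤ (2 / η + 1) * (t * η / 2 + 1) := by
          have : (2 / η + 1) * (t * η / 2 + 1) = t + 1 + (2 / η + t * η / 2) := by
            field_simp
            ring
          rw [this]
          exact le_add_of_nonneg_right (by positivity)
      _ ≤ (2 / η + 1) * exp (t * η / 2) := by gcongr
  calc (t + 1) * exp (-(t * η)) ≤ (2 / η + 1) * exp (t * η / 2) * exp (-(t * η)) := by gcongr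
    _ = (2 / η + 1) * exp (-(t * η / 2)) := by
        rw [mul_assoc, ← exp_add]
        ring_nf

lemma tendsto_div_rpow_of_le {a : ℕ → ℝ} {p q : ℝ} (hpq : p ≤ q)
    (h : Tendsto (fun n : ℕ => a n / (n : ℝ) ^ p) atTop (𝓝 0)) :
    Tendsto (fun n : ℕ => a n / (n : ℝ) ^ q) atTop (𝓝 0) := by
  refine squeeze_zero_norm' ?_ (tendsto_zero_iff_norm_tendsto_zero.1 h)
  filter_upwards [eventually_ge_atTop 1] with n hn
  have hn' : (1 : ℝ) ≤ n := by exact_mod_cast hn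
  simp only [norm_div, norm_of_nonneg (rpow_nonneg n.cast_nonneg _)]
  gcongr

lemma tendsto_log_div_of_exp_bounds {ι : Type*} {l : Filter ι} [l.NeBot] {b P : ι → ℝ} {I : ℝ}
    (hb : Tendsto b l atTop)
    (hlow : ∀ q, I < q → ∃ C > 0, ∀ᶠ n in l, C * exp (-(q * b n)) ≤ P n)
    (hup : ∀ q, q < I → ∃ C > 0, ∀ᶠ n in l, P n ≤ C * exp (-(q * b n))) :
    Tendsto (fun n => log (P n) / b n) l (𝓝 (-I)) := by
  have hlim (C q : ℝ) : Tendsto (fun n => log C / b n - q) l (𝓝 (-q)) := by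
    simpa using (hb.const_div_atTop (log C)).sub_const q
  have hlog {C q t : ℝ} (hC : 0 < C) (ht : 0 < t) :
      log C / t - q = log (C * exp (-(q * t))) / t := by
    rw [log_mul hC.ne' (exp_pos _).ne', log_exp]
    field_simp
    ring
  refine tendsto_order.2 ⟨fun y hy => ?_, fun y hy => ?_⟩
  · obtain ⟨q, hIq, hqy⟩ := exists_between (lt_neg_of_lt_neg hy)
    obtain ⟨C, hC, h⟩ := hlow q hIq
    filter_upwards [h, hb.eventually_gt_atTop 0,
      (hlim C q).eventually_const_lt (lt_neg_of_lt_neg hqy)] with n hn hbn hyn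
    refine hyn.trans_le ?_
    rw [hlog hC hbn]
    gcongr
  · obtain ⟨q, hyq, hqI⟩ := exists_between (neg_lt_of_neg_lt hy)
    obtain ⟨C, hC, h⟩ := hup q hqI
    obtain ⟨C', hC', h'⟩ := hlow (I + 1) (lt_add_one I)
    filter_upwards [h, h', hb.eventually_gt_atTop 0,
      (hlim C q).eventually_lt_const (neg_lt_of_neg_lt hyq)] with n hn hn' hbn hyn
    have hP : 0 < P n := lt_of_lt_of_le (by positivity) hn'
    refine lt_of_le_of_lt ?_ hyn
    rw [hlog hC hbn]
    gcongr

end Analysis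

section LatticeSums

lemma sum_pow_le_of_injOn {ι : Type*} {r : ℝ} (h0 : 0 ≤ r) (h1 : r < 1) {S : Finset ι} {f : ι → ℕ}
    (hf : Set.InjOn f S) : ∑ k ∈ S, r ^ f k ≤ (1 - r)⁻¹ := by
  rw [← Finset.sum_image (f := fun j => r ^ j) hf]
  exact sum_le_hasSum _ (fun i _ => pow_nonneg h0 i) (hasSum_geometric_of_lt_one h0 h1)

lemma inv_one_sub_exp_neg_le {s : ℝ} (hs : 0 < s) : (1 - exp (-s))⁻¹ ≤ 1 + 1 / s := by
  have hexp : exp (-s) ≤ (1 + s)⁻¹ := by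
    rw [exp_neg]
    gcongr
    linarith [add_one_le_exp s]
  have hinv : (1 + 1 / s)⁻¹ = 1 - (1 + s)⁻¹ := by
    field_simp
    ring
  refine inv_le_of_inv_le₀ (by positivity) ?_
  rw [hinv]
  gcongr

lemma sum_exp_neg_mul_abs_sub_le {s : ℝ} (hs : 0 < s) (κ : ℝ) (S : Finset ℤ) :
    ∑ k ∈ S, exp (-(s * |k - κ|)) ≤ 2 * (1 + 1 / s) := by
  have hside (T : Finset ℤ) (f : ℤ → ℕ) (hf : Set.InjOn f T)
      (hle : ∀ k ∈ T, (f k : ℝ) ≤ |k - κ|) : ∑ k ∈ T, exp (-(s * |k - κ|)) ≤ 1 + 1 / s :=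
    calc ∑ k ∈ T, exp (-(s * |k - κ|)) ≤ ∑ k ∈ T, exp (-s) ^ f k := by
          gcongr with k hk
          rw [← exp_nat_mul, exp_le_exp]
          nlinarith [hle k hk]
      _ ≤ (1 - exp (-s))⁻¹ := sum_pow_le_of_injOn (exp_pos _).le (by simpa using hs) hf
      _ ≤ 1 + 1 / s := inv_one_sub_exp_neg_le hs
  rw [← Finset.sum_filter_add_sum_filter_not S (· ≤ ⌊κ⌋), two_mul]
  refine add_le_add (hside _ (fun k => (⌊κ⌋ - k).toNat) ?_ ?_)
    (hside _ (fun k => (k - ⌊κ⌋ - 1).toNat) ?_ ?_)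
  · intro i hi j hj hij
    simp only [Finset.coe_filter, Set.mem_ofPred_eq] at hi hj hij
    omega
  · intro k hk
    have hk' : k ≤ ⌊κ⌋ := (Finset.mem_filter.1 hk).2
    have hcast : (((⌊κ⌋ - k).toNat : ℤ) : ℝ) = ⌊κ⌋ - k := by
      rw [Int.toNat_of_nonneg (sub_nonneg.2 hk'), Int.cast_sub]
    rw [← Int.cast_natCast, hcast]
    linarith [neg_le_abs (k - κ), Int.floor_le κ]
  · intro i hi j hj hij
    simp only [Finset.coe_filter, Set.mem_ofPred_eq] at hi hj hij
    omega
  · intro k hk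
    have hk' : ⌊κ⌋ < k := not_le.1 (Finset.mem_filter.1 hk).2
    have hcast : (((k - ⌊κ⌋ - 1).toNat : ℤ) : ℝ) = k - ⌊κ⌋ - 1 := by
      rw [Int.toNat_of_nonneg (by omega)]
      push_cast
      ring
    rw [← Int.cast_natCast, hcast]
    linarith [le_abs_self (k - κ), Int.lt_floor_add_one κ]

lemma sum_exp_neg_sq_mul_sub_le {s : ℝ} (hs : 0 < s) (κ : ℝ) (S : Finset ℤ) :
    ∑ k ∈ S, exp (-(s * (k - κ)) ^ 2) ≤ exp 1 * (2 + 1 / s) :=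
  calc ∑ k ∈ S, exp (-(s * (k - κ)) ^ 2) ≤ ∑ k ∈ S, exp 1 * exp (-(2 * s * |k - κ|)) := by
        gcongr with k
        rw [← exp_add, exp_le_exp, ← sq_abs, abs_mul, abs_of_pos hs]
        nlinarith [sq_nonneg (s * |k - κ| - 1)]
    _ = exp 1 * ∑ k ∈ S, exp (-(2 * s * |k - κ|)) := by rw [Finset.mul_sum]
    _ ≤ exp 1 * (2 * (1 + 1 / (2 * s))) := by
        gcongr
        exact sum_exp_neg_mul_abs_sub_le (by positivity) κ S
    _ = exp 1 * (2 + 1 / s) := by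
        field_simp

lemma sub_sub_one_le_card_Ioo_floor_ceil {α : ℝ} (hα : 0 ≤ α) (β : ℝ) :
    β - α - 1 ≤ (Finset.Ioo ⌊α⌋₊ ⌈β⌉₊).card := by
  have hcard : ⌈β⌉₊ ≤ (Finset.Ioo ⌊α⌋₊ ⌈β⌉₊).card + ⌊α⌋₊ + 1 := by
    rw [Nat.card_Ioo]
    omega
  have hcast : (⌈β⌉₊ : ℝ) ≤ (Finset.Ioo ⌊α⌋₊ ⌈β⌉₊).card + ⌊α⌋₊ + 1 := by exact_mod_cast hcard
  linarith [Nat.le_ceil β, Nat.floor_le hα]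

end LatticeSums

section MeanField

/-- The probability of `s` under the mean-field Gibbs measure on `{-1, 1}ⁿ` whose density with
respect to the uniform measure is proportional to `exp (n * g (S_n / n))`. The cubic Curie–Weiss
model is the case `g x = K / 3 * x ^ 3 + J / 2 * x ^ 2`. -/
noncomputable def meanFieldProb (n : ℕ) (g : ℝ → ℝ) (s : Set (Fin n → Bool)) : ℝ :=
  (∑ x, s.indicator (fun x => exp (n * g (magPP n x))) x) /
    ∑ x : Fin n → Bool, exp (n * g (magPP n x))

/-- The rate function `I - g`, up to an additive constant, of the magnetization per particle in the
mean-field model with interaction `g`. -/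
noncomputable def freeEnergy (g : ℝ → ℝ) (x : ℝ) : ℝ := binEnt x - g x

/-- The interaction `g` is continuous on `[-1, 1]` and its free energy has a unique minimizer `m`,
which is an interior point, near which `g` is `C²`, and at which the second derivative `c` of the
free energy is positive. -/
structure IsNondegenerateMin (g : ℝ → ℝ) (m c : ℝ) : Prop where
  mem_Ioo : m ∈ Set.Ioo (-1 : ℝ) 1
  continuousOn : ContinuousOn g (Set.Icc (-1) 1)
  contDiffAt : ContDiffAt ℝ 2 g m
  lt_of_ne : ∀ y ∈ Set.Icc (-1 : ℝ) 1, y ≠ m → freeEnergy g m < freeEnergy g y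
  iteratedDeriv_two : iteratedDeriv 2 (freeEnergy g) m = c
  pos : 0 < c

/-- The magnetization per particle of a configuration of `n` spins, `k` of which are `+1`. -/
noncomputable def levelMag (n k : ℕ) : ℝ := (2 * k - n) / n

/-- The value of `W_n = (S_n - n * m) / √(n / c)` on the configurations with `k` spins `+1`. -/
noncomputable def levelDev (m c : ℝ) (n k : ℕ) : ℝ := (2 * k - n - n * m) / √(n / c)

/-- The total Gibbs weight of the configurations with `k` spins `+1`. It is scaled by
`exp (n * freeEnergy g m)`, which keeps the partition function bounded when `m` minimizes the free
energy. -/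
noncomputable def levelWeight (g : ℝ → ℝ) (m : ℝ) (n k : ℕ) : ℝ :=
  n.choose k * exp (n * (g (levelMag n k) + freeEnergy g m))

open Classical in
/-- The numbers of spins `+1` for which `W_n` takes a value in `A`. -/
noncomputable def levels (m c : ℝ) (n : ℕ) (A : Set ℝ) : Finset ℕ :=
  {k ∈ Finset.range (n + 1) | levelDev m c n k ∈ A}

/-- The Gibbs weight of the event `W_n ∈ A`, scaled as in `levelWeight`. -/
noncomputable def levelMass (g : ℝ → ℝ) (m c : ℝ) (n : ℕ) (A : Set ℝ) : ℝ :=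
  ∑ k ∈ levels m c n A, levelWeight g m n k

lemma mem_levels {m c : ℝ} {n k : ℕ} {A : Set ℝ} :
    k ∈ levels m c n A ↔ k ≤ n ∧ levelDev m c n k ∈ A := by
  simp only [levels, Finset.mem_filter, Finset.mem_range_succ_iff]

lemma levelWeight_nonneg (g : ℝ → ℝ) (m : ℝ) (n k : ℕ) : 0 ≤ levelWeight g m n k := by
  unfold levelWeight
  positivity

lemma levelMass_nonneg (g : ℝ → ℝ) (m c : ℝ) (n : ℕ) (A : Set ℝ) : 0 ≤ levelMass g m c n A :=
  Finset.sum_nonneg fun k _ => levelWeight_nonneg g m n k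

lemma levelMass_mono (g : ℝ → ℝ) (m c : ℝ) (n : ℕ) {A B : Set ℝ} (hAB : A ⊆ B) :
    levelMass g m c n A ≤ levelMass g m c n B :=
  Finset.sum_le_sum_of_subset_of_nonneg
    (fun _ hk => mem_levels.2 ⟨(mem_levels.1 hk).1, hAB (mem_levels.1 hk).2⟩)
    fun k _ _ => levelWeight_nonneg g m n k

lemma totalMag_decide_mem (n : ℕ) (s : Finset (Fin n)) :
    totalMag n (fun i => decide (i ∈ s)) = 2 * s.card - n := by
  have hspin (i : Fin n) : spin (decide (i ∈ s)) = 2 * (if i ∈ s then 1 else 0) - 1 := by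
    by_cases hi : i ∈ s
    · simp only [spin, hi, decide_true, if_true]
      norm_num
    · simp [spin, hi]
  simp only [totalMag, hspin, Finset.sum_sub_distrib, ← Finset.mul_sum]
  simp

lemma sum_comp_totalMag (n : ℕ) (f : ℝ → ℝ) :
    ∑ x : Fin n → Bool, f (totalMag n x) =
      ∑ k ∈ Finset.range (n + 1), n.choose k * f (2 * k - n) := by
  let e : Finset (Fin n) ≃ (Fin n → Bool) :=
    { toFun := fun s i => decide (i ∈ s)
      invFun := fun x => {i | x i = true}
      left_inv := fun s => by ext; simp
      right_inv := fun x => by ext; simp }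
  calc ∑ x : Fin n → Bool, f (totalMag n x)
      = ∑ s : Finset (Fin n), f (2 * s.card - n) :=
        (Fintype.sum_equiv e _ _ fun s => by rw [← totalMag_decide_mem]; rfl).symm
    _ = ∑ k ∈ Finset.range (n + 1), n.choose k * f (2 * k - n) := by
        rw [← Finset.powerset_univ, Finset.sum_powerset_apply_card fun k : ℕ => f (2 * k - n)]
        simp

lemma levelMass_eq_sum_mul_exp (g : ℝ → ℝ) (m c : ℝ) (n : ℕ) (A : Set ℝ) :
    levelMass g m c n A =
      (∑ x, {y | (totalMag n y - n * m) / √(n / c) ∈ A}.indicator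
        (fun x => exp (n * g (magPP n x))) x) * exp (n * freeEnergy g m) := by
  classical
  have h := sum_comp_totalMag n fun t =>
    if (t - n * m) / √(n / c) ∈ A then exp (n * g (t / n)) else 0
  simp only [Set.indicator_apply, Set.mem_ofPred_eq, magPP]
  rw [h, levelMass, levels, Finset.sum_filter, Finset.sum_mul]
  refine Finset.sum_congr rfl fun k _ => ?_
  have hdev : levelDev m c n k ∈ A ↔ (2 * k - n - n * m) / √(n / c) ∈ A := Iff.rfl
  by_cases hk : levelDev m c n k ∈ A
  · rw [if_pos hk, if_pos (hdev.1 hk), mul_assoc, ← exp_add, ← mul_add, levelWeight, levelMag]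
  · rw [if_neg hk, if_neg (hdev.not.1 hk), mul_zero, zero_mul]

lemma meanFieldProb_eq_levelMass_div (g : ℝ → ℝ) (m c : ℝ) (n : ℕ) (A : Set ℝ) :
    meanFieldProb n g {y | (totalMag n y - n * m) / √(n / c) ∈ A} =
      levelMass g m c n A / levelMass g m c n Set.univ := by
  rw [levelMass_eq_sum_mul_exp, levelMass_eq_sum_mul_exp, mul_div_mul_right _ _ (exp_pos _).ne']
  simp [meanFieldProb]

lemma cubicProb_eq_meanFieldProb (n : ℕ) (K J : ℝ) (s : Set (Fin n → Bool)) :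
    cubicProb n K J s = meanFieldProb n (fun x => K / 3 * x ^ 3 + J / 2 * x ^ 2) s := by
  have hw (x : Fin n → Bool) : 0 ≤ cubicWeight n K J x := (exp_pos _).le
  have hmeasure : cubicMeasure n K J s = (ENNReal.ofReal (∑ x, cubicWeight n K J x))⁻¹ *
      ENNReal.ofReal (∑ x, s.indicator (cubicWeight n K J) x) := by
    rw [ENNReal.ofReal_sum_of_nonneg fun x _ => hw x,
      ENNReal.ofReal_sum_of_nonneg fun x _ => Set.indicator_nonneg (fun x _ => hw x) x]
    simp only [cubicMeasure, Measure.smul_apply, Measure.finsetSum_apply, smul_eq_mul,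
      Measure.dirac_apply]
    congr! 2 with x
    by_cases hx : x ∈ s <;> simp [hx]
  rw [cubicProb, hmeasure, ENNReal.toReal_mul, ENNReal.toReal_inv,
    ENNReal.toReal_ofReal (Finset.sum_nonneg fun x _ => hw x),
    ENNReal.toReal_ofReal (Finset.sum_nonneg fun x _ => Set.indicator_nonneg (fun x _ => hw x) x),
    ← div_eq_inv_mul]
  rfl

lemma freeEnergy_cubic (K J : ℝ) :
    freeEnergy (fun x => K / 3 * x ^ 3 + J / 2 * x ^ 2) = phiKJ K J := by
  ext x
  simp only [freeEnergy, phiKJ]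
  ring

lemma isNondegenerateMin_cubic {K J m : ℝ} (hmem : m ∈ Set.Ioo (-1 : ℝ) 1)
    (hmin : ∀ y ∈ Set.Icc (-1 : ℝ) 1, phiKJ K J m ≤ phiKJ K J y)
    (huniq : ∀ y ∈ Set.Icc (-1 : ℝ) 1, phiKJ K J y = phiKJ K J m → y = m)
    (hconv : 0 < iteratedDeriv 2 (phiKJ K J) m) :
    IsNondegenerateMin (fun x => K / 3 * x ^ 3 + J / 2 * x ^ 2) m
      (iteratedDeriv 2 (phiKJ K J) m) where
  mem_Ioo := hmem
  continuousOn := by fun_prop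
  contDiffAt := by fun_prop
  lt_of_ne y hy hne := by
    rw [freeEnergy_cubic]
    exact (hmin y hy).lt_of_ne fun h => hne (huniq y hy h.symm)
  iteratedDeriv_two := by rw [freeEnergy_cubic]
  pos := hconv

end MeanField

section LevelWeights

lemma binEnt_eq_neg_binEntropy (x : ℝ) : binEnt x = -binEntropy ((1 + x) / 2) := by
  have hx : 1 - (1 + x) / 2 = (1 - x) / 2 := by ring
  rw [binEnt, binEntropy, hx, log_inv, log_inv]
  ring

lemma continuous_binEnt : Continuous binEnt := by
  simp only [funext binEnt_eq_neg_binEntropy]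
  exact (binEntropy_continuous.comp (by fun_prop)).neg

lemma contDiffAt_binEnt {x : ℝ} (hx : x ≠ -1) (hx' : x ≠ 1) {n : WithTop ℕ∞} :
    ContDiffAt ℝ n binEnt x := by
  have hneg : (1 - x) / 2 ≠ 0 := div_ne_zero (sub_ne_zero.2 hx'.symm) two_ne_zero
  have hpos : (1 + x) / 2 ≠ 0 := div_ne_zero (fun h => hx (by linarith)) two_ne_zero
  unfold binEnt
  fun_prop (disch := assumption)

lemma one_add_levelMag_div_two {n : ℕ} (hn : n ≠ 0) (k : ℕ) : (1 + levelMag n k) / 2 = k / n := by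
  unfold levelMag
  field_simp
  ring

lemma levelMag_mem_Icc {n k : ℕ} (hn : n ≠ 0) (hk : k ≤ n) : levelMag n k ∈ Set.Icc (-1 : ℝ) 1 := by
  have hfrac := one_add_levelMag_div_two hn k
  have hle : (k / n : ℝ) ≤ 1 := div_le_one_of_le₀ (by exact_mod_cast hk) n.cast_nonneg
  have hnonneg : (0 : ℝ) ≤ k / n := by positivity
  constructor <;> linarith

lemma levelWeight_eq (g : ℝ → ℝ) (m : ℝ) {n : ℕ} (hn : n ≠ 0) (k : ℕ) :
    levelWeight g m n k = n.choose k / exp (n * binEntropy (k / n)) *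
      exp (-(n * (freeEnergy g (levelMag n k) - freeEnergy g m))) := by
  rw [levelWeight, div_mul_eq_mul_div, mul_div_assoc, ← exp_sub, freeEnergy.eq_1 g (levelMag n k),
    binEnt_eq_neg_binEntropy, one_add_levelMag_div_two hn]
  ring_nf

lemma levelWeight_le_exp (g : ℝ → ℝ) (m : ℝ) {n : ℕ} (hn : n ≠ 0) (k : ℕ) :
    levelWeight g m n k ≤ exp (-(n * (freeEnergy g (levelMag n k) - freeEnergy g m))) := by
  rw [levelWeight_eq g m hn]
  exact mul_le_of_le_one_left (exp_pos _).le
    (div_le_one_of_le₀ (choose_le_exp_binEntropy n k) (exp_pos _).le)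

lemma sqrt_div_mul_sub_eq {n : ℕ} (hn : n ≠ 0) (k : ℕ) :
    √(n / (k * (n - k))) = 2 / √(n * (1 - levelMag n k ^ 2)) := by
  have hmag : n * (1 - levelMag n k ^ 2) = 2 ^ 2 * (k * (n - k) / n) := by
    unfold levelMag
    field_simp
    ring
  rw [hmag, Real.sqrt_mul (by norm_num), Real.sqrt_sq (by norm_num),
    div_mul_cancel_left₀ two_ne_zero, ← Real.sqrt_inv, inv_div]

lemma pos_and_lt_of_abs_levelMag_lt_one {n k : ℕ} (hn : n ≠ 0) (hmag : |levelMag n k| < 1) :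
    0 < k ∧ k < n := by
  have hn' : (0 : ℝ) < n := by positivity
  have hfrac := one_add_levelMag_div_two hn k
  obtain ⟨hlo, hhi⟩ := abs_lt.1 hmag
  have hpos : (0 : ℝ) < k / n := by linarith
  have hlt : (k / n : ℝ) < 1 := by linarith
  exact ⟨by exact_mod_cast (div_pos_iff_of_pos_right hn').1 hpos,
    by exact_mod_cast (div_lt_one hn').1 hlt⟩

lemma levelWeight_le (g : ℝ → ℝ) (m : ℝ) {n k : ℕ} (hn : n ≠ 0) (hmag : |levelMag n k| < 1) :
    levelWeight g m n k ≤ 2 / √(n * (1 - levelMag n k ^ 2)) *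
      exp (-(n * (freeEnergy g (levelMag n k) - freeEnergy g m))) := by
  obtain ⟨hk, hkn⟩ := pos_and_lt_of_abs_levelMag_lt_one hn hmag
  rw [levelWeight_eq g m hn, ← sqrt_div_mul_sub_eq hn]
  gcongr
  rw [div_le_iff₀ (exp_pos _)]
  exact choose_le_sqrt_mul_exp_binEntropy hk hkn

lemma le_levelWeight (g : ℝ → ℝ) (m : ℝ) {n k : ℕ} (hn : n ≠ 0) (hmag : |levelMag n k| < 1) :
    1 / 4 * (2 / √(n * (1 - levelMag n k ^ 2))) *
      exp (-(n * (freeEnergy g (levelMag n k) - freeEnergy g m))) ≤ levelWeight g m n k := by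
  obtain ⟨hk, hkn⟩ := pos_and_lt_of_abs_levelMag_lt_one hn hmag
  rw [levelWeight_eq g m hn, ← sqrt_div_mul_sub_eq hn]
  gcongr
  rw [le_div_iff₀ (exp_pos _), mul_assoc]
  exact sqrt_mul_exp_binEntropy_le_choose hk hkn

end LevelWeights

section GaussianProfile

variable {g : ℝ → ℝ} {m c : ℝ}

lemma sqrt_mul_mul_sqrt_div (hc : 0 < c) (n : ℕ) : √(n * c) * √(n / c) = n := by
  rw [← Real.sqrt_mul (by positivity), mul_assoc, mul_div_cancel₀ _ hc.ne',
    Real.sqrt_mul_self n.cast_nonneg]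

lemma levelDev_eq (hc : 0 < c) {n : ℕ} (hn : n ≠ 0) (k : ℕ) :
    levelDev m c n k = √(n * c) * (levelMag n k - m) := by
  unfold levelDev levelMag
  rw [div_eq_iff (by positivity), mul_right_comm, sqrt_mul_mul_sqrt_div hc]
  field_simp

lemma levelDev_sq (hc : 0 < c) {n : ℕ} (hn : n ≠ 0) (k : ℕ) :
    levelDev m c n k ^ 2 = n * (c * (levelMag n k - m) ^ 2) := by
  rw [levelDev_eq hc hn, mul_pow, Real.sq_sqrt (by positivity), mul_assoc]

lemma eventually_abs_freeEnergy_sub_sub_le (h : IsNondegenerateMin g m c) {ε : ℝ} (hε : 0 < ε) :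
    ∀ᶠ u in 𝓝 m, |freeEnergy g u - freeEnergy g m - c / 2 * (u - m) ^ 2| ≤
      ε * (c / 2 * (u - m) ^ 2) := by
  have hmin : IsLocalMin (freeEnergy g) m := by
    filter_upwards [Icc_mem_nhds h.mem_Ioo.1 h.mem_Ioo.2] with y hy
    rcases eq_or_ne y m with rfl | hne
    exacts [le_rfl, (h.lt_of_ne y hy hne).le]
  have hsmooth : ContDiffAt ℝ 2 (freeEnergy g) m :=
    (contDiffAt_binEnt h.mem_Ioo.1.ne' h.mem_Ioo.2.ne).sub h.contDiffAt
  have hlittle := isLittleO_sub_sub_sq_of_isLocalMin hsmooth hmin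
  rw [h.iteratedDeriv_two] at hlittle
  have hpos := h.pos
  filter_upwards [hlittle.def (c := ε * (c / 2)) (by positivity)] with u hu
  simpa only [norm_eq_abs, abs_sq, mul_assoc] using hu

lemma eventually_levelWeight_le_gaussian (h : IsNondegenerateMin g m c) {ε : ℝ} (hε : 0 < ε) :
    ∃ A > 0, ∀ᶠ u in 𝓝 m, ∀ n k : ℕ, n ≠ 0 → levelMag n k = u →
      levelWeight g m n k ≤ A / √n * exp (-((1 - ε) * levelDev m c n k ^ 2 / 2)) := by
  have hvar : 0 < 1 - m ^ 2 := by nlinarith [h.mem_Ioo.1, h.mem_Ioo.2]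
  refine ⟨2 / √((1 - m ^ 2) / 2), by positivity, ?_⟩
  have hvar_near : ∀ᶠ u in 𝓝 m, (1 - m ^ 2) / 2 < 1 - u ^ 2 :=
    (show Continuous fun u : ℝ => 1 - u ^ 2 by fun_prop).continuousAt.eventually_const_lt
      (by linarith)
  filter_upwards [hvar_near, eventually_abs_freeEnergy_sub_sub_le h hε]
    with u hu hquad n k hn hku
  subst hku
  have hmag : |levelMag n k| < 1 := by
    rw [← sq_lt_one_iff_abs_lt_one]
    linarith
  have hexp : (1 - ε) * levelDev m c n k ^ 2 / 2 ≤
      n * (freeEnergy g (levelMag n k) - freeEnergy g m) := by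
    rw [levelDev_sq h.pos hn]
    nlinarith [(abs_le.1 hquad).1, n.cast_nonneg (α := ℝ)]
  refine (levelWeight_le g m hn hmag).trans ?_
  rw [div_div, mul_comm √_ √_, ← Real.sqrt_mul n.cast_nonneg]
  gcongr

lemma eventually_gaussian_le_levelWeight (h : IsNondegenerateMin g m c) {ε : ℝ} (hε : 0 < ε) :
    ∀ᶠ u in 𝓝 m, ∀ n k : ℕ, n ≠ 0 → levelMag n k = u →
      1 / 2 / √n * exp (-((1 + ε) * levelDev m c n k ^ 2 / 2)) ≤ levelWeight g m n k := by
  filter_upwards [Ioo_mem_nhds h.mem_Ioo.1 h.mem_Ioo.2, eventually_abs_freeEnergy_sub_sub_le h hε]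
    with u hu hquad n k hn hku
  subst hku
  have hvar : 0 < 1 - levelMag n k ^ 2 := by nlinarith [hu.1, hu.2]
  have hexp : n * (freeEnergy g (levelMag n k) - freeEnergy g m) ≤
      (1 + ε) * levelDev m c n k ^ 2 / 2 := by
    rw [levelDev_sq h.pos hn]
    nlinarith [(abs_le.1 hquad).2, n.cast_nonneg (α := ℝ)]
  refine le_trans ?_ (le_levelWeight g m hn (abs_lt.2 hu))
  calc 1 / 2 / √n * exp (-((1 + ε) * levelDev m c n k ^ 2 / 2))
      = 1 / 4 * (2 / √n) * exp (-((1 + ε) * levelDev m c n k ^ 2 / 2)) := by ring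
    _ ≤ _ := by
        gcongr
        exact mul_le_of_le_one_right n.cast_nonneg (by linarith [sq_nonneg (levelMag n k)])

lemma sum_exp_neg_mul_levelDev_sq_le {ε : ℝ} (hε : 0 < ε) (m : ℝ) (hc : 0 < c) {n : ℕ}
    (hn : n ≠ 0) (S : Finset ℕ) :
    ∑ k ∈ S, exp (-(ε * levelDev m c n k ^ 2)) ≤ exp 1 * (2 + 1 / (2 * √(ε * c))) * √n := by
  have hn1 : 1 ≤ √n := Real.one_le_sqrt.2 (by exact_mod_cast Nat.one_le_iff_ne_zero.2 hn)
  set s := 2 * √(ε * c) / √n with hs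
  have hsum := sum_exp_neg_sq_mul_sub_le (s := s) (by positivity) (n * (1 + m) / 2)
    (S.map Nat.castEmbedding)
  rw [Finset.sum_map] at hsum
  have hterm (k : ℕ) : ε * levelDev m c n k ^ 2 = (s * (k - n * (1 + m) / 2)) ^ 2 := by
    rw [levelDev_sq hc hn, mul_pow, hs, div_pow, mul_pow, Real.sq_sqrt (by positivity),
      Real.sq_sqrt n.cast_nonneg, levelMag]
    field_simp
    ring
  calc ∑ k ∈ S, exp (-(ε * levelDev m c n k ^ 2)) ≤ exp 1 * (2 + 1 / s) := by
        simpa only [hterm, Nat.castEmbedding_apply, Int.cast_natCast] using hsum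
    _ = exp 1 * (2 * 1 + 1 / (2 * √(ε * c)) * √n) := by
        rw [hs, one_div_div, mul_one, div_mul_eq_mul_div, one_mul]
    _ ≤ exp 1 * (2 * √n + 1 / (2 * √(ε * c)) * √n) := by gcongr
    _ = exp 1 * (2 + 1 / (2 * √(ε * c))) * √n := by ring

lemma sqrt_div_four_le_card_levels_Ioo (hc : 0 < c) {n : ℕ} (hn : 16 * c ≤ n) {s T : ℝ}
    (hs : |s| ≤ T) (hs' : |s + 1| ≤ T) (hT : T ≤ (1 - |m|) * √(n * c)) :
    √(n / c) / 4 ≤ (levels m c n (Set.Ioo s (s + 1))).card := by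
  set σ := √(n / c) with hσ
  have hσ4 : 4 ≤ σ := Real.le_sqrt_of_sq_le <| by
    rw [le_div_iff₀ hc]
    linarith
  have hTσ : T * σ ≤ n * (1 - |m|) :=
    calc T * σ ≤ (1 - |m|) * √(n * c) * σ := by gcongr
      _ = n * (1 - |m|) := by rw [mul_assoc, sqrt_mul_mul_sqrt_div hc, mul_comm]
  set α := (n * (1 + m) + s * σ) / 2 with hα
  set β := (n * (1 + m) + (s + 1) * σ) / 2 with hβ
  have hα0 : 0 ≤ α := by
    nlinarith [neg_abs_le s, neg_abs_le m, n.cast_nonneg (α := ℝ)]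
  have hβn : β ≤ n := by
    nlinarith [le_abs_self (s + 1), le_abs_self m, n.cast_nonneg (α := ℝ)]
  have hsub : Finset.Ioo ⌊α⌋₊ ⌈β⌉₊ ⊆ levels m c n (Set.Ioo s (s + 1)) := by
    intro k hk
    rw [Finset.mem_Ioo, Nat.floor_lt hα0, Nat.lt_ceil] at hk
    have hkn : (k : ℝ) ≤ n := by linarith
    refine mem_levels.2 ⟨by exact_mod_cast hkn, ?_⟩
    rw [levelDev, ← hσ, Set.mem_Ioo, lt_div_iff₀ (by linarith), div_lt_iff₀ (by linarith)]
    constructor <;> linarith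
  calc σ / 4 ≤ β - α - 1 := by linarith
    _ ≤ (Finset.Ioo ⌊α⌋₊ ⌈β⌉₊).card := sub_sub_one_le_card_Ioo_floor_ceil hα0 β
    _ ≤ _ := by exact_mod_cast Finset.card_le_card hsub

end GaussianProfile

section Tails

variable {g : ℝ → ℝ} {m c : ℝ}

lemma sum_levelWeight_near_le (h : IsNondegenerateMin g m c) {ε : ℝ} (hε : 0 < ε) (hε1 : ε ≤ 1) :
    ∃ C > 0, ∃ δ > 0, ∀ n : ℕ, n ≠ 0 → ∀ t, 0 ≤ t → ∀ S : Finset ℕ,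
      (∀ k ∈ S, |levelMag n k - m| < δ ∧ t ≤ |levelDev m c n k|) →
        ∑ k ∈ S, levelWeight g m n k ≤ C * exp (-((1 - ε) * t ^ 2 / 2)) := by
  have hc := h.pos
  obtain ⟨A, hA, hnear⟩ := eventually_levelWeight_le_gaussian h (half_pos hε)
  obtain ⟨δ, hδ, hball⟩ := Metric.eventually_nhds_iff.1 hnear
  refine ⟨A * (exp 1 * (2 + 1 / (2 * √(ε / 4 * c)))), by positivity, δ, hδ,
    fun n hn t ht S hS => ?_⟩
  -- Giving up `ε z² / 2` of the exponent `(1 - ε / 2) z²` leaves a summable Gaussian factor.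
  have hsplit {z : ℝ} (hz : t ≤ |z|) :
      (1 - ε) * t ^ 2 / 2 + ε / 4 * z ^ 2 ≤ (1 - ε / 2) * z ^ 2 / 2 := by
    have hsq : t ^ 2 ≤ z ^ 2 := sq_abs z ▸ pow_le_pow_left₀ ht hz 2
    nlinarith [mul_le_mul_of_nonneg_left hsq (sub_nonneg.2 hε1)]
  calc ∑ k ∈ S, levelWeight g m n k
      ≤ ∑ k ∈ S, A / √n * exp (-((1 - ε / 2) * levelDev m c n k ^ 2 / 2)) :=
        Finset.sum_le_sum fun k hk => hball (hS k hk).1 n k hn rfl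
    _ ≤ ∑ k ∈ S, A / √n * exp (-((1 - ε) * t ^ 2 / 2) + -(ε / 4 * levelDev m c n k ^ 2)) := by
        gcongr with k hk
        linarith [hsplit (hS k hk).2]
    _ = A / √n * exp (-((1 - ε) * t ^ 2 / 2)) *
          ∑ k ∈ S, exp (-(ε / 4 * levelDev m c n k ^ 2)) := by
        simp only [exp_add, Finset.mul_sum, mul_assoc]
    _ ≤ A / √n * exp (-((1 - ε) * t ^ 2 / 2)) *
          (exp 1 * (2 + 1 / (2 * √(ε / 4 * c))) * √n) := by
        gcongr
        exact sum_exp_neg_mul_levelDev_sq_le (by positivity) m hc hn S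
    _ = A * (exp 1 * (2 + 1 / (2 * √(ε / 4 * c)))) * exp (-((1 - ε) * t ^ 2 / 2)) := by
        field_simp

lemma sum_levelWeight_far_le (h : IsNondegenerateMin g m c) {δ : ℝ} (hδ : 0 < δ) :
    ∃ C > 0, ∃ η > 0, ∀ n : ℕ, n ≠ 0 → ∀ S ⊆ Finset.range (n + 1),
      (∀ k ∈ S, δ ≤ |levelMag n k - m|) →
        ∑ k ∈ S, levelWeight g m n k ≤ C * exp (-(n * η / 2)) := by
  obtain ⟨η, hη, hgap⟩ := exists_add_le_of_isCompact_of_lt (f := freeEnergy g) isCompact_Icc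
    (continuous_binEnt.continuousOn.sub h.continuousOn) h.lt_of_ne hδ
  refine ⟨2 / η + 1, by positivity, η, hη, fun n hn S hSn hS => ?_⟩
  have hterm : ∀ k ∈ S, levelWeight g m n k ≤ exp (-(n * η)) := fun k hk => by
    refine (levelWeight_le_exp g m hn k).trans ?_
    gcongr
    linarith [hgap _ (levelMag_mem_Icc hn (Finset.mem_range_succ_iff.1 (hSn hk))) (hS k hk)]
  have hcard : (S.card : ℝ) ≤ n + 1 := by
    exact_mod_cast (Finset.card_le_card hSn).trans_eq (Finset.card_range _)
  calc ∑ k ∈ S, levelWeight g m n k ≤ S.card * exp (-(n * η)) := by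
        simpa only [nsmul_eq_mul] using Finset.sum_le_card_nsmul S _ _ hterm
    _ ≤ (n + 1) * exp (-(n * η)) := by gcongr
    _ ≤ (2 / η + 1) * exp (-(n * η / 2)) := add_one_mul_exp_neg_mul_le hη n.cast_nonneg

lemma levelMass_le_gaussian (h : IsNondegenerateMin g m c) {ε : ℝ} (hε : 0 < ε) (hε1 : ε ≤ 1) :
    ∃ C > 0, ∃ δ > 0, ∀ n : ℕ, n ≠ 0 → ∀ t, 0 ≤ t → t ≤ δ * √n →
      levelMass g m c n {z | t ≤ |z|} ≤ C * exp (-((1 - ε) * t ^ 2 / 2)) := by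
  obtain ⟨C, hC, δ, hδ, hnear⟩ := sum_levelWeight_near_le h hε hε1
  obtain ⟨C', hC', η, hη, hfar⟩ := sum_levelWeight_far_le h hδ
  refine ⟨C + C', by positivity, √η, by positivity, fun n hn t ht htn => ?_⟩
  have hremainder : (1 - ε) * t ^ 2 / 2 ≤ n * η / 2 := by
    have hsq : t ^ 2 ≤ η * n := by
      calc t ^ 2 ≤ (√η * √n) ^ 2 := by gcongr
        _ = η * n := by rw [mul_pow, Real.sq_sqrt hη.le, Real.sq_sqrt n.cast_nonneg]
    nlinarith [mul_nonneg hε.le (sq_nonneg t)]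
  rw [levelMass, ← Finset.sum_filter_add_sum_filter_not _ (fun k => |levelMag n k - m| < δ),
    add_mul]
  refine add_le_add (hnear n hn t ht _ fun k hk => ?_) ((hfar n hn _ ?_ fun k hk => ?_).trans ?_)
  · obtain ⟨hk, hkδ⟩ := Finset.mem_filter.1 hk
    exact ⟨hkδ, (mem_levels.1 hk).2⟩
  · exact fun k hk => Finset.mem_range_succ_iff.2 (mem_levels.1 (Finset.mem_filter.1 hk).1).1
  · exact not_lt.1 (Finset.mem_filter.1 hk).2
  · gcongr

lemma gaussian_le_levelMass_Ioo (h : IsNondegenerateMin g m c) {ε : ℝ} (hε : 0 < ε) :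
    ∃ C > 0, ∃ δ > 0, ∀ᶠ n : ℕ in atTop, ∀ s T, T ≤ δ * √n → |s| ≤ T → |s + 1| ≤ T →
      C * exp (-((1 + ε) * T ^ 2 / 2)) ≤ levelMass g m c n (Set.Ioo s (s + 1)) := by
  have hc := h.pos
  obtain ⟨r, hr, hball⟩ := Metric.eventually_nhds_iff.1 (eventually_gaussian_le_levelWeight h hε)
  have hm : 0 < 1 - |m| := sub_pos.2 (abs_lt.2 h.mem_Ioo)
  set ρ := min (r / 2) (1 - |m|)
  refine ⟨1 / (8 * √c), by positivity, ρ * √c, by positivity, ?_⟩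
  filter_upwards [eventually_ge_atTop ⌈16 * c⌉₊, eventually_ne_atTop 0] with n hn16 hn s T hT hs hs'
  have hTρ : T ≤ ρ * √(n * c) := by rwa [mul_comm (n : ℝ), Real.sqrt_mul hc.le, ← mul_assoc]
  have hcard : √(n / c) / 4 ≤ (levels m c n (Set.Ioo s (s + 1))).card := by
    refine sqrt_div_four_le_card_levels_Ioo hc (Nat.ceil_le.1 hn16) hs hs' (hTρ.trans ?_)
    gcongr
    exact min_le_right _ _
  have hterm : ∀ k ∈ levels m c n (Set.Ioo s (s + 1)),
      1 / 2 / √n * exp (-((1 + ε) * T ^ 2 / 2)) ≤ levelWeight g m n k := fun k hk => by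
    obtain ⟨hlo, hhi⟩ := (mem_levels.1 hk).2
    have hz : |levelDev m c n k| ≤ T :=
      abs_le.2 ⟨(neg_le_of_abs_le hs).trans hlo.le, hhi.le.trans (le_of_abs_le hs')⟩
    have hdist : dist (levelMag n k) m ≤ ρ := by
      rw [levelDev_eq hc hn, abs_mul, abs_of_nonneg (Real.sqrt_nonneg _), mul_comm] at hz
      exact le_of_mul_le_mul_right (hz.trans hTρ) (by positivity)
    have hr_half : ρ ≤ r / 2 := min_le_left _ _
    refine le_trans ?_ (hball (hdist.trans_lt (by linarith)) n k hn rfl)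
    have hsq : levelDev m c n k ^ 2 ≤ T ^ 2 := sq_le_sq' (neg_le_of_abs_le hz) (le_of_abs_le hz)
    gcongr
  calc 1 / (8 * √c) * exp (-((1 + ε) * T ^ 2 / 2))
      = √(n / c) / 4 * (1 / 2 / √n * exp (-((1 + ε) * T ^ 2 / 2))) := by
        rw [Real.sqrt_div' _ hc.le]
        field_simp
        norm_num
    _ ≤ (levels m c n (Set.Ioo s (s + 1))).card *
          (1 / 2 / √n * exp (-((1 + ε) * T ^ 2 / 2))) := by gcongr
    _ ≤ levelMass g m c n (Set.Ioo s (s + 1)) := by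
        rw [← nsmul_eq_mul]
        exact Finset.card_nsmul_le_sum _ _ _ hterm

end Tails

section ModerateDeviations

variable {g : ℝ → ℝ} {m c : ℝ}

lemma levelMass_univ_le (h : IsNondegenerateMin g m c) :
    ∃ C > 0, ∀ n : ℕ, n ≠ 0 → levelMass g m c n Set.univ ≤ C := by
  obtain ⟨C, hC, δ, hδ, hle⟩ := levelMass_le_gaussian h one_pos le_rfl
  refine ⟨C, hC, fun n hn => ?_⟩
  simpa [Set.ofPred_true] using hle n hn 0 le_rfl (by positivity)

lemma le_levelMass_univ (h : IsNondegenerateMin g m c) :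
    ∃ C > 0, ∀ᶠ n : ℕ in atTop, C ≤ levelMass g m c n Set.univ := by
  obtain ⟨C, hC, δ, hδ, hle⟩ := gaussian_le_levelMass_Ioo h one_pos
  refine ⟨C * exp (-((1 + 1) * 1 ^ 2 / 2)), by positivity, ?_⟩
  have hsqrt : Tendsto (fun n : ℕ => δ * √n) atTop atTop :=
    (tendsto_sqrt_atTop.comp tendsto_natCast_atTop_atTop).const_mul_atTop hδ
  filter_upwards [hle, hsqrt.eventually_ge_atTop 1] with n hn hδn
  exact (hn 0 1 hδn (by simp) (by simp)).trans (levelMass_mono g m c n (Set.subset_univ _))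

lemma levelMass_div_le_gaussian (h : IsNondegenerateMin g m c) {ε : ℝ} (hε : 0 < ε) (hε1 : ε ≤ 1) :
    ∃ C > 0, ∃ δ > 0, ∀ᶠ n : ℕ in atTop, ∀ t, 0 ≤ t → t ≤ δ * √n → ∀ A ⊆ {z | t ≤ |z|},
      levelMass g m c n A / levelMass g m c n Set.univ ≤ C * exp (-((1 - ε) * t ^ 2 / 2)) := by
  obtain ⟨C, hC, δ, hδ, hle⟩ := levelMass_le_gaussian h hε hε1
  obtain ⟨Z, hZ, hge⟩ := le_levelMass_univ h
  refine ⟨C / Z, by positivity, δ, hδ, ?_⟩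
  filter_upwards [hge, eventually_ne_atTop 0] with n hZn hn t ht htn A hA
  rw [div_mul_eq_mul_div]
  have hmass := (levelMass_mono g m c n hA).trans (hle n hn t ht htn)
  gcongr

lemma gaussian_le_levelMass_div (h : IsNondegenerateMin g m c) {ε : ℝ} (hε : 0 < ε) :
    ∃ C > 0, ∃ δ > 0, ∀ᶠ n : ℕ in atTop, ∀ s T, T ≤ δ * √n → |s| ≤ T → |s + 1| ≤ T →
      ∀ A, Set.Ioo s (s + 1) ⊆ A →
        C * exp (-((1 + ε) * T ^ 2 / 2)) ≤ levelMass g m c n A / levelMass g m c n Set.univ := by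
  obtain ⟨C, hC, δ, hδ, hge⟩ := gaussian_le_levelMass_Ioo h hε
  obtain ⟨Z, hZ, hle⟩ := levelMass_univ_le h
  obtain ⟨Z', hZ', hpos⟩ := le_levelMass_univ h
  refine ⟨C / Z, by positivity, δ, hδ, ?_⟩
  filter_upwards [hge, hpos, eventually_ne_atTop 0] with n hn hposn hn0 s T hT hs hs' A hA
  rw [div_mul_eq_mul_div]
  have hmass := (hn s T hT hs hs').trans (levelMass_mono g m c n hA)
  exact div_le_div₀ (levelMass_nonneg g m c n A) hmass (hZ'.trans_le hposn) (hle n hn0)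

lemma eventually_mul_add_one_le_mul_sqrt {a : ℕ → ℝ}
    (haslow : Tendsto (fun n : ℕ => a n / √n) atTop (𝓝 0)) (x : ℝ) {δ : ℝ} (hδ : 0 < δ) :
    ∀ᶠ n : ℕ in atTop, a n * x + 1 ≤ δ * √n := by
  have hinv : Tendsto (fun n : ℕ => (√n)⁻¹) atTop (𝓝 0) :=
    (tendsto_sqrt_atTop.comp tendsto_natCast_atTop_atTop).inv_tendsto_atTop
  have hlim : Tendsto (fun n : ℕ => a n / √n * x + (√n)⁻¹) atTop (𝓝 0) := by
    simpa using (haslow.mul_const x).add hinv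
  filter_upwards [hlim.eventually_le_const hδ, eventually_gt_atTop 0] with n hn hn0
  have : 0 < √(n : ℝ) := by positivity
  calc a n * x + 1 = (a n / √n * x + (√n)⁻¹) * √n := by field_simp
    _ ≤ δ * √n := by gcongr

lemma eventually_mul_mul_add_one_sq_le {ι : Type*} {l : Filter ι} {a : ι → ℝ}
    (ha : Tendsto a l atTop) {k x q : ℝ} (hq : k * x ^ 2 < q) :
    ∀ᶠ i in l, k * (a i * x + 1) ^ 2 ≤ q * a i ^ 2 := by
  have hlim : Tendsto (fun i => k * (x + (a i)⁻¹) ^ 2) l (𝓝 (k * x ^ 2)) := by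
    simpa using ((ha.inv_tendsto_atTop.const_add x).pow 2).const_mul k
  filter_upwards [hlim.eventually_le_const hq, ha.eventually_gt_atTop 0] with i hi hai
  calc k * (a i * x + 1) ^ 2 = k * (x + (a i)⁻¹) ^ 2 * a i ^ 2 := by field_simp
    _ ≤ q * a i ^ 2 := by gcongr

lemma tendsto_log_levelMass_div (h : IsNondegenerateMin g m c) {a : ℕ → ℝ}
    (ha : Tendsto a atTop atTop) (haslow : Tendsto (fun n : ℕ => a n / √n) atTop (𝓝 0))
    {x : ℝ} (hx : 0 ≤ x) {A : ℕ → Set ℝ} (hA : ∀ᶠ n in atTop, A n ⊆ {z | a n * x ≤ |z|})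
    (hwindow : ∀ᶠ n in atTop, ∃ s, |s| ≤ a n * x + 1 ∧ |s + 1| ≤ a n * x + 1 ∧
      Set.Ioo s (s + 1) ⊆ A n) :
    Tendsto (fun n => log (levelMass g m c n (A n) / levelMass g m c n Set.univ) / a n ^ 2)
      atTop (𝓝 (-(x ^ 2 / 2))) := by
  have hrange {δ : ℝ} (hδ : 0 < δ) := eventually_mul_add_one_le_mul_sqrt haslow x hδ
  refine tendsto_log_div_of_exp_bounds ((tendsto_pow_atTop two_ne_zero).comp ha)
    (fun q hq => ?_) fun q hq => ?_
  · obtain ⟨ε, ⟨hε, -⟩, hεq⟩ : ∃ ε ∈ Set.Ioo (0 : ℝ) 1, (1 + ε) * x ^ 2 / 2 < q := by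
      have hcont : ContinuousAt (fun ε : ℝ => (1 + ε) * x ^ 2 / 2) 0 := by fun_prop
      have hlt := hcont.eventually_lt_const (u := q) (by simpa using hq)
      exact (Filter.Eventually.and (Ioo_mem_nhdsGT one_pos)
        (hlt.filter_mono nhdsWithin_le_nhds)).exists
    obtain ⟨C, hC, δ, hδ, hge⟩ := gaussian_le_levelMass_div h hε
    have hrate := eventually_mul_mul_add_one_sq_le ha (k := (1 + ε) / 2) (x := x) (q := q)
      (by linarith)
    refine ⟨C, hC, ?_⟩
    filter_upwards [hge, hwindow, hrange hδ, hrate] with n hn ⟨s, hs, hs', hsA⟩ hδn hqn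
    refine le_trans ?_ (hn s _ hδn hs hs' _ hsA)
    gcongr
    exact (mul_div_right_comm _ _ _).trans_le hqn
  · obtain ⟨ε, ⟨hε, hε1⟩, hqε⟩ : ∃ ε ∈ Set.Ioo (0 : ℝ) 1, q < (1 - ε) * x ^ 2 / 2 := by
      have hcont : ContinuousAt (fun ε : ℝ => (1 - ε) * x ^ 2 / 2) 0 := by fun_prop
      have hlt := hcont.eventually_const_lt (u := q) (by simpa using hq)
      exact (Filter.Eventually.and (Ioo_mem_nhdsGT one_pos)
        (hlt.filter_mono nhdsWithin_le_nhds)).exists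
    obtain ⟨C, hC, δ, hδ, hle⟩ := levelMass_div_le_gaussian h hε hε1.le
    refine ⟨C, hC, ?_⟩
    filter_upwards [hle, hA, hrange hδ, ha.eventually_ge_atTop 0] with n hn hAn hδn han
    refine (hn _ (mul_nonneg han hx) (by linarith) _ hAn).trans ?_
    gcongr
    nlinarith [sq_nonneg (a n)]

theorem stmt_19_general (h : IsNondegenerateMin g m c) {a : ℕ → ℝ} (ha : Tendsto a atTop atTop)
    (haslow : Tendsto (fun n : ℕ => a n / √n) atTop (𝓝 0)) {x : ℝ} (hx : 0 ≤ x) :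
    Tendsto (fun n : ℕ => 1 / a n ^ 2 *
        log (meanFieldProb n g {y | a n * x < (totalMag n y - n * m) / √(n / c)}))
      atTop (𝓝 (-(x ^ 2) / 2)) ∧
    Tendsto (fun n : ℕ => 1 / a n ^ 2 *
        log (meanFieldProb n g {y | (totalMag n y - n * m) / √(n / c) < -(a n * x)}))
      atTop (𝓝 (-(x ^ 2) / 2)) := by
  have hax : ∀ᶠ n in atTop, 0 ≤ a n * x :=
    (ha.eventually_ge_atTop 0).mono fun n hn => mul_nonneg hn hx
  have hlim (A : ℕ → Set ℝ) := tendsto_log_levelMass_div h ha haslow hx (A := A)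
  simp only [← meanFieldProb_eq_levelMass_div, ← neg_div, ← one_div_mul_eq_div _ (log _)] at hlim
  constructor
  · refine hlim (fun n => Set.Ioi (a n * x)) (.of_forall fun n z hz => ?_) ?_
    · exact hz.le.trans (le_abs_self z)
    · refine hax.mono fun n hn => ⟨a n * x, ?_, ?_, Set.Ioo_subset_Ioi_self⟩
      · rw [abs_of_nonneg hn]; linarith
      · rw [abs_of_nonneg (by linarith)]
  · refine hlim (fun n => Set.Iio (-(a n * x))) (.of_forall fun n z hz => ?_) ?_
    · exact (le_neg_of_le_neg (le_of_lt hz)).trans (neg_le_abs z)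
    · refine hax.mono fun n hn => ⟨-(a n * x) - 1, ?_, ?_, fun z hz => ?_⟩
      · exact abs_le.2 ⟨by linarith, by linarith⟩
      · exact abs_le.2 ⟨by linarith, by linarith⟩
      · simpa using hz.2

end ModerateDeviations

/-- Moderate deviation principle for the rescaled magnetization
`W_n = (S_n − n m*)/σ_n` of the cubic Curie–Weiss model (unique nondegenerate
phase): for any speed `a_n → ∞` with `a_n/n^{1/6} → 0` and any `x ≥ 0`,
`(1/a_n²) log P_{n,K,J}(W_n > a_n x) → −x²/2` and
`(1/a_n²) log P_{n,K,J}(W_n < −a_n x) → −x²/2`. -/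
theorem stmt_19 (K J : ℝ) (hK : 0 < K) (mstar : ℝ)
    (hmem : mstar ∈ Set.Ioo (-1 : ℝ) 1)
    (hmin : ∀ y ∈ Set.Icc (-1 : ℝ) 1, phiKJ K J mstar ≤ phiKJ K J y)
    (huniq : ∀ y ∈ Set.Icc (-1 : ℝ) 1, phiKJ K J y = phiKJ K J mstar → y = mstar)
    (hconv : 0 < iteratedDeriv 2 (phiKJ K J) mstar)
    (a : ℕ → ℝ) (hapos : ∀ n, 0 < a n)
    (hainf : Filter.Tendsto a Filter.atTop Filter.atTop)
    (haslow : Filter.Tendsto (fun n : ℕ => a n / (n : ℝ) ^ ((1 : ℝ)/6))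
      Filter.atTop (nhds 0)) :
    ∀ x : ℝ, 0 ≤ x →
      Filter.Tendsto (fun n : ℕ =>
          (1 / (a n) ^ 2) * Real.log (cubicProb n K J
            {y | a n * x < (totalMag n y - n * mstar) /
              Real.sqrt (n / iteratedDeriv 2 (phiKJ K J) mstar)}))
        Filter.atTop (nhds (-(x ^ 2) / 2)) ∧
      Filter.Tendsto (fun n : ℕ =>
          (1 / (a n) ^ 2) * Real.log (cubicProb n K J
            {y | (totalMag n y - n * mstar) /
              Real.sqrt (n / iteratedDeriv 2 (phiKJ K J) mstar) < -(a n * x)}))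
        Filter.atTop (nhds (-(x ^ 2) / 2)) := by
  intro x hx
  have hsqrt : Tendsto (fun n : ℕ => a n / √n) atTop (𝓝 0) := by
    simpa only [Real.sqrt_eq_rpow] using
      tendsto_div_rpow_of_le (by norm_num : (1 : ℝ) / 6 ≤ 1 / 2) haslow
  simp only [cubicProb_eq_meanFieldProb]
  exact stmt_19_general (isNondegenerateMin_cubic hmem hmin huniq hconv) hainf hsqrt hx
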